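/- arXiv:1609.04715 — 5 statements merged into one kernel-verified Lean document; each statement's English description precedes it below -/
import Mathlib

section
/- For every triple (a,b,c) ∈ S, the rational number 2·(−32 + a)·(64a + b²) is a square in ℚ, i.e. there exists q ∈ ℚ with q² = 2(−32 + a)(64a + b²). -/
/-- `u(t) = −2⁴·t/(t² − 10)`. -/
def uS (t : ℚ) : ℚ := -2 ^ 4 * t / (t ^ 2 - 10)

/-- The set `S = {(f₁(u(t)), g₁(u(t)), h₁(u(t))) : t ∈ ℚ, t ≠ 0}` where `f₁ = t² + 2⁵`,
`g₁ = −2⁴t` and `h₁ = −(t² − 2⁵)`. -/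
def Sset : Set (ℚ × ℚ × ℚ) :=
  {p | ∃ t : ℚ, t ≠ 0 ∧
    p = (uS t ^ 2 + 2 ^ 5, -2 ^ 4 * uS t, -(uS t ^ 2 - 2 ^ 5))}

/-- for every `(a,b,c) ∈ S`, the rational number `2(−32 + a)(64a + b²)` is a
square in `ℚ`. -/
theorem square_on_S :
    ∀ p ∈ Sset, ∃ q : ℚ, q ^ 2 = 2 * (-32 + p.1) * (64 * p.1 + p.2.1 ^ 2) := by
  rintro _ ⟨t, -, rfl⟩
  -- With `u = uS t` the product is `64 u² (10 u² + 64)`, and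
  -- `10 u² + 64 = 64 (t² + 10)² / (t² - 10)²`.
  refine ⟨64 * uS t * ((t ^ 2 + 10) / (t ^ 2 - 10)), ?_⟩
  by_cases h : t ^ 2 - 10 = 0
  · -- No rational `t` satisfies this, but here `uS t` would be `0` by the convention `x / 0 = 0`,
    -- so both sides vanish and the irrationality of `√10` is not needed.
    norm_num [uS, h]
  · simp only [uS]
    field_simp
    ring
end

section
/- Let f, g, h ∈ k[t] be polynomials with f² + g² = h². If f and g are coprime, then there exist coprime polynomials h₁, h₂ ∈ k[t] such that f = (h₁² + h₂²)/2, g = (h₁² − h₂²)/(2i) and h = h₁·h₂. Conversely, if h₁, h₂ ∈ k[t] are any coprime polynomials and f, g, h are defined by these three formulas, then f² + g² = h² and f and g are coprime. -/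
/-!
Over a field with `i² = -1` the equation `f² + g² = h²` factors as `(f + i g)(f - i g) = h²`.
A common root of the two factors is a common root of `f` and `g`, so coprimality of `f, g` makes the
factors coprime; hence each is a unit times a square (`exists_associated_pow_of_mul_eq_pow'`), and
since the units of `k[t]` are constants, which are squares in `k`, each is a square. Writing
`f + i g = h₁²` and `f - i g = h₂²` gives the formulas for `f` and `g`, and `(h₁ h₂)² = h²`
forces `h = ± h₁ h₂`; the sign is absorbed in `h₁`. The converse is the same identity
read backwards.
-/

open Polynomial

/-- `k` is the algebraic closure of `ℚ`. -/
noncomputable abbrev kbar : Type := AlgebraicClosure ℚ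

/-- Over an algebraically closed field, a factor of a square that is coprime to its cofactor is
itself a square: the unit constant relating it to a square has a square root. -/
lemma exists_sq_of_coprime_mul_eq_sq {k : Type*} [Field k] [IsAlgClosed k]
    {u v h : Polynomial k} (huv : IsCoprime u v) (e : u * v = h ^ 2) :
    ∃ p : Polynomial k, u = p ^ 2 := by
  obtain ⟨d, w, hw⟩ := exists_associated_pow_of_mul_eq_pow' huv e
  obtain ⟨c, -, hc⟩ := Polynomial.isUnit_iff.1 w.isUnit
  obtain ⟨s, hs⟩ := IsAlgClosed.exists_pow_nat_eq c (n := 2) two_pos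
  refine ⟨d * C s, ?_⟩
  rw [← hw, ← hc, ← hs, C_pow]
  ring

/-- Polynomials without a common root over an algebraically closed field generate the unit ideal. -/
lemma isCoprime_of_no_common_root {k : Type*} [Field k] [IsAlgClosed k]
    {u v : Polynomial k} (H : ∀ a : k, ¬ (u.eval a = 0 ∧ v.eval a = 0)) : IsCoprime u v := by
  refine (Polynomial.isCoprime_iff_aeval_ne_zero_of_isAlgClosed k k u v).2 fun a => ?_
  simpa [or_iff_not_imp_left] using H a

/-- if `f, g, h ∈ k[t]` satisfy `f² + g² = h²` and `f, g` are coprime (no common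
root), then there exist coprime `h₁, h₂ ∈ k[t]` with `f = (h₁² + h₂²)/2`, `g = (h₁² − h₂²)/(2i)`
and `h = h₁h₂`; conversely, for any coprime `h₁, h₂`, the polynomials `f, g, h` defined by these
formulas satisfy `f² + g² = h²` and `f, g` are coprime. -/
theorem pythagorean_polynomial_characterization (i : kbar) (hi : i ^ 2 = -1) :
    (∀ f g h : Polynomial kbar, f ^ 2 + g ^ 2 = h ^ 2 →
      (∀ a : kbar, ¬ (f.eval a = 0 ∧ g.eval a = 0)) →
      ∃ h₁ h₂ : Polynomial kbar,
        (∀ a : kbar, ¬ (h₁.eval a = 0 ∧ h₂.eval a = 0)) ∧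
        f = C (2⁻¹ : kbar) * (h₁ ^ 2 + h₂ ^ 2) ∧
        g = C ((2 * i)⁻¹ : kbar) * (h₁ ^ 2 - h₂ ^ 2) ∧
        h = h₁ * h₂) ∧
    (∀ h₁ h₂ : Polynomial kbar, (∀ a : kbar, ¬ (h₁.eval a = 0 ∧ h₂.eval a = 0)) →
      ∀ f g h : Polynomial kbar,
        f = C (2⁻¹ : kbar) * (h₁ ^ 2 + h₂ ^ 2) →
        g = C ((2 * i)⁻¹ : kbar) * (h₁ ^ 2 - h₂ ^ 2) →
        h = h₁ * h₂ →
        f ^ 2 + g ^ 2 = h ^ 2 ∧ ∀ a : kbar, ¬ (f.eval a = 0 ∧ g.eval a = 0)) := by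
  have hi0 : i ≠ 0 := by
    rintro rfl
    norm_num at hi
  have h2 : (2 : kbar) ≠ 0 := two_ne_zero
  have hI : (C i : Polynomial kbar) ^ 2 = -1 := by rw [← C_pow, hi]; simp
  -- The scalars in the formulas for `f` and `g`, as relations in `k[t]`.
  have hA : (C (2⁻¹ : kbar) : Polynomial kbar) * 2 = 1 := by
    rw [← C_ofNat, ← C_mul, inv_mul_cancel₀ h2, C_1]
  have hB : (C ((2 * i)⁻¹ : kbar) : Polynomial kbar) * (2 * C i) = 1 := by
    rw [← C_ofNat, ← C_mul, ← C_mul, inv_mul_cancel₀ (mul_ne_zero h2 hi0), C_1]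
  refine ⟨fun f g h e H => ?_, fun h₁ h₂ H f g h hf hg hh => ?_⟩
  · have huv : IsCoprime (f + C i * g) (f - C i * g) := by
      refine isCoprime_of_no_common_root fun a ⟨ha, hb⟩ => H a ?_
      simp only [eval_add, eval_sub, eval_mul, eval_C] at ha hb
      have hfa : 2 * f.eval a = 0 := by linear_combination ha + hb
      have hga : 2 * i * g.eval a = 0 := by linear_combination ha - hb
      exact ⟨(mul_eq_zero.1 hfa).resolve_left h2,
        (mul_eq_zero.1 hga).resolve_left (mul_ne_zero h2 hi0)⟩
    have hfac : (f + C i * g) * (f - C i * g) = h ^ 2 := by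
      linear_combination e - g ^ 2 * hI
    obtain ⟨p, hp⟩ := exists_sq_of_coprime_mul_eq_sq huv hfac
    obtain ⟨q, hq⟩ := exists_sq_of_coprime_mul_eq_sq huv.symm ((mul_comm _ _).trans hfac)
    -- It suffices to choose the sign of the square root `p` so that `h = p * q`.
    obtain ⟨p, hp, hh⟩ : ∃ p, f + C i * g = p ^ 2 ∧ h = p * q := by
      have hs : h ^ 2 = (p * q) ^ 2 := by rw [← hfac, hp, hq]; ring
      rcases sq_eq_sq_iff_eq_or_eq_neg.1 hs with hs | hs
      · exact ⟨p, hp, hs⟩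
      · exact ⟨-p, by rw [hp]; ring, by rw [hs]; ring⟩
    refine ⟨p, q, fun a ⟨ha, hb⟩ => ?_, ?_, ?_, hh⟩
    · obtain ⟨r, s, hrs⟩ := huv
      have := congrArg (eval a) hrs
      rw [hp, hq] at this
      simp [ha, hb] at this
    · rw [← hp, ← hq]
      linear_combination -f * hA
    · rw [← hp, ← hq]
      linear_combination -g * hB
  · have hp : f + C i * g = h₁ ^ 2 := by
      -- `C i * C (2 * i)⁻¹ = C 2⁻¹` is `hB` up to halving.
      rw [hf, hg]
      linear_combination C (2⁻¹ : kbar) * (h₁ ^ 2 - h₂ ^ 2) * hB +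
        (h₁ ^ 2 - C i * C ((2 * i)⁻¹ : kbar) * (h₁ ^ 2 - h₂ ^ 2)) * hA
    have hq : f - C i * g = h₂ ^ 2 := by
      rw [hf, hg]
      linear_combination -C (2⁻¹ : kbar) * (h₁ ^ 2 - h₂ ^ 2) * hB +
        (h₂ ^ 2 + C i * C ((2 * i)⁻¹ : kbar) * (h₁ ^ 2 - h₂ ^ 2)) * hA
    refine ⟨?_, fun a ⟨ha, hb⟩ => H a ?_⟩
    · rw [hh, mul_pow, ← hp, ← hq]
      linear_combination g ^ 2 * hI
    · have h1 := congrArg (eval a) hp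
      have h2 := congrArg (eval a) hq
      simp only [eval_add, eval_sub, eval_mul, eval_C, eval_pow, ha, hb, mul_zero, add_zero,
        sub_zero] at h1 h2
      exact ⟨pow_eq_zero_iff two_ne_zero |>.1 h1.symm, pow_eq_zero_iff two_ne_zero |>.1 h2.symm⟩
end

section
/- Let f, g ∈ k[t] be coprime polynomials with deg f = 2 and deg g ≤ 2, and suppose there exists h ∈ k[t] with f² + g² = h². Then 1 ≤ deg g, the polynomial h is nonconstant of degree at most 2, and the polynomials f, g, h and f² − g² are all separable (squarefree). -/
/-!
Over an algebraically closed field, a Pythagorean triple `f ^ 2 + g ^ 2 = h ^ 2` of coprime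
polynomials is parametrized in the classical way. The factors of `f ^ 2 = (h - g) * (h + g)` are
coprime, hence each is a square: `h - g = a ^ 2` and `h + g = b ^ 2`, so that `f = ± a * b`
(`exists_parametrization`). As `deg g, deg h ≤ 2` and `deg f = 2`, both `a` and `b` have degree
exactly `1`. Up to nonzero constants each of `f`, `g`, `h`, `f ^ 2 - g ^ 2` is now a binary form in
the coprime linear polynomials `a, b`, and it splits into pairwise distinct factors:
`f = ± a b`, `2 g = (b - a) (b + a)`, `2 h = (b - i a) (b + i a)`, and `4 (f ^ 2 - g ^ 2)` is minus
the product of `b - c a` over the four numbers `c = ± 1 ± √2`. A factor `b - c a` is nonzero of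
degree at most `1`, hence squarefree, and two of them with distinct `c` are coprime; at most one of
them is constant.
-/

open Polynomial

section Pencil

variable {K : Type*} [Field K]

lemma squarefree_of_natDegree_le_one {p : K[X]} (h0 : p ≠ 0) (h1 : p.natDegree ≤ 1) :
    Squarefree p := by
  rcases Nat.le_one_iff_eq_zero_or_eq_one.mp h1 with h | h
  · exact (isUnit_iff_degree_eq_zero.mpr
      ((degree_eq_iff_natDegree_eq h0).mpr h)).squarefree
  · exact (irreducible_of_degree_eq_one
      ((degree_eq_iff_natDegree_eq h0).mpr h)).squarefree

lemma isCoprime_pencil {a b : K[X]} (hab : IsCoprime a b) {c d : K} (hcd : c ≠ d) :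
    IsCoprime (b - C c * a) (b - C d * a) := by
  obtain ⟨u, v, huv⟩ := hab
  have hC : C (d - c)⁻¹ * (C d - C c) = 1 := by
    rw [← C_sub, ← C_mul, inv_mul_cancel₀ (sub_ne_zero.mpr hcd.symm), C_1]
  -- `(d - c) a = (b - c a) - (b - d a)` and `(d - c) b = d (b - c a) - c (b - d a)`
  refine ⟨C (d - c)⁻¹ * (u + v * C d), -C (d - c)⁻¹ * (u + v * C c), ?_⟩
  linear_combination huv + (u * a + v * b) * hC

lemma pencil_ne_zero {a b : K[X]} (hab : IsCoprime a b) (ha : a.natDegree = 1) (c : K) :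
    b - C c * a ≠ 0 := by
  intro h
  have hb : b = C c * a := sub_eq_zero.mp h
  have hu : IsUnit a := hab.isUnit_of_dvd' dvd_rfl (hb ▸ dvd_mul_left a (C c))
  have := natDegree_eq_zero_of_isUnit hu
  omega

lemma squarefree_pencil {a b : K[X]} (hab : IsCoprime a b) (ha : a.natDegree = 1)
    (hb : b.natDegree ≤ 1) (c : K) : Squarefree (b - C c * a) := by
  refine squarefree_of_natDegree_le_one (pencil_ne_zero hab ha c) ?_
  refine (natDegree_sub_le _ _).trans (max_le hb ?_)
  exact (natDegree_C_mul_le c a).trans ha.le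

lemma squarefree_mul_of_isCoprime {p q : K[X]} (h : IsCoprime p q) (hp : Squarefree p)
    (hq : Squarefree q) : Squarefree (p * q) :=
  squarefree_mul_iff.mpr ⟨h.isRelPrime, hp, hq⟩

lemma squarefree_C_mul {u : K} (hu : u ≠ 0) {p : K[X]} (hp : Squarefree p) :
    Squarefree (C u * p) := by
  have hU : IsUnit (C u) := isUnit_C.mpr hu.isUnit
  exact squarefree_mul_iff.mpr ⟨hU.isRelPrime_left, hU.squarefree, hp⟩

/-- At most one member of the pencil `b - c a` is constant, because two of them span `a`. -/
lemma natDegree_pencil_mul_pos {a b : K[X]} (hab : IsCoprime a b) (ha : a.natDegree = 1)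
    {c d : K} (hcd : c ≠ d) : 0 < ((b - C c * a) * (b - C d * a)).natDegree := by
  rw [natDegree_mul (pencil_ne_zero hab ha c) (pencil_ne_zero hab ha d)]
  by_contra! h
  have h3 : (b - C c * a) - (b - C d * a) = C (d - c) * a := by rw [C_sub]; ring
  have h4 := natDegree_sub_le (b - C c * a) (b - C d * a)
  rw [h3, natDegree_C_mul (sub_ne_zero.mpr hcd.symm), ha] at h4
  rcases le_max_iff.mp h4 with h5 | h5 <;> omega

/-- A product of two coprime polynomials that is a square has square factors: the units left over
by unique factorization are constants, and those are squares as well. -/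
lemma exists_eq_sq_of_mul_eq_sq [IsAlgClosed K] {p q r : K[X]} (hpq : IsCoprime p q)
    (h : p * q = r ^ 2) : ∃ a, p = a ^ 2 := by
  obtain ⟨d, u, hu⟩ := exists_associated_pow_of_mul_eq_pow' hpq h
  obtain ⟨w, -, hw⟩ := isUnit_iff.mp u.isUnit
  obtain ⟨z, hz⟩ := IsAlgClosed.exists_pow_nat_eq w two_pos
  exact ⟨d * C z, by rw [← hu, ← hw, ← hz, C_pow]; ring⟩

/-- The classical parametrization of coprime Pythagorean triples. -/
lemma exists_parametrization [IsAlgClosed K] [NeZero (2 : K)] {f g h : K[X]}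
    (hcop : ∀ x : K, ¬ (f.eval x = 0 ∧ g.eval x = 0)) (hfgh : f ^ 2 + g ^ 2 = h ^ 2) :
    ∃ a b : K[X], IsCoprime a b ∧ h - g = a ^ 2 ∧ h + g = b ^ 2 ∧ (f = a * b ∨ f = -(a * b)) := by
  have hco : IsCoprime (h - g) (h + g) := by
    refine (isCoprime_iff_aeval_ne_zero_of_isAlgClosed K K _ _).mpr (fun x => ?_)
    by_contra! hx
    simp only [coe_aeval_eq_eval, eval_sub, eval_add] at hx
    have hg : g.eval x = 0 := by
      have h2 : (2 : K) * g.eval x = 0 := by linear_combination hx.2 - hx.1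
      exact (mul_eq_zero.mp h2).resolve_left two_ne_zero
    have hf : f.eval x ^ 2 = 0 := by
      have := congrArg (eval x) hfgh
      simp only [eval_add, eval_pow] at this
      linear_combination this + (g.eval x + h.eval x) * hx.1
    exact hcop x ⟨pow_eq_zero_iff two_ne_zero |>.mp hf, hg⟩
  have hmul : (h - g) * (h + g) = f ^ 2 := by linear_combination -hfgh
  obtain ⟨a, ha⟩ := exists_eq_sq_of_mul_eq_sq hco hmul
  obtain ⟨b, hb⟩ := exists_eq_sq_of_mul_eq_sq hco.symm ((mul_comm _ _).trans hmul)
  refine ⟨a, b, ?_, ha, hb, ?_⟩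
  · rw [ha, hb] at hco
    exact (IsCoprime.pow_iff two_pos two_pos).mp hco
  · apply sq_eq_sq_iff_eq_or_eq_neg.mp
    rw [← hmul, ha, hb]; ring

end Pencil

/-- if `f, g ∈ k[t]` are coprime (no common root) with `deg f = 2`, `deg g ≤ 2`,
and `f² + g² = h²` for some `h ∈ k[t]`, then `1 ≤ deg g`, `h` is nonconstant of degree at most
`2`, and `f`, `g`, `h` and `f² − g²` are all squarefree. -/
theorem separability_of_fgh (f g h : Polynomial kbar)
    (hcop : ∀ a : kbar, ¬ (f.eval a = 0 ∧ g.eval a = 0))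
    (hdf : f.natDegree = 2) (hdg : g.natDegree ≤ 2)
    (hfgh : f ^ 2 + g ^ 2 = h ^ 2) :
    1 ≤ g.natDegree ∧ 0 < h.natDegree ∧ h.natDegree ≤ 2 ∧
      Squarefree f ∧ Squarefree g ∧ Squarefree h ∧ Squarefree (f ^ 2 - g ^ 2) := by
  obtain ⟨a, b, hab, ha, hb, hf⟩ := exists_parametrization hcop hfgh
  have hdh : h.natDegree ≤ 2 := by
    have h1 := natDegree_add_le (f ^ 2) (g ^ 2)
    rw [hfgh, natDegree_pow, natDegree_pow, natDegree_pow] at h1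
    rcases le_max_iff.mp h1 with h2 | h2 <;> omega
  have hda : a.natDegree ≤ 1 := by
    have h1 := natDegree_sub_le h g
    rw [ha, natDegree_pow] at h1
    rcases le_max_iff.mp h1 with h2 | h2 <;> omega
  have hdb : b.natDegree ≤ 1 := by
    have h1 := natDegree_add_le h g
    rw [hb, natDegree_pow] at h1
    rcases le_max_iff.mp h1 with h2 | h2 <;> omega
  have hdab : (a * b).natDegree = 2 := by
    rcases hf with hf | hf
    · rw [← hf, hdf]
    · rw [← natDegree_neg, ← hf, hdf]
  have ha1 : a.natDegree = 1 := by
    have := natDegree_mul_le (p := a) (q := b)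
    omega
  obtain ⟨i, hi⟩ := IsAlgClosed.exists_pow_nat_eq (-1 : kbar) two_pos
  obtain ⟨s, hs⟩ := IsAlgClosed.exists_pow_nat_eq (2 : kbar) two_pos
  have hi0 : i ≠ 0 := by rintro rfl; norm_num at hi
  have hs0 : s ≠ 0 := by rintro rfl; norm_num at hs
  have hiC : (C i : kbar[X]) ^ 2 = -1 := by rw [← C_pow, hi, C_neg, C_1]
  have hsC : (C s : kbar[X]) ^ 2 = 2 := by rw [← C_pow, hs]; rfl
  have h2C : (C (2⁻¹ : kbar)) * 2 = (1 : kbar[X]) := by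
    rw [show (2 : kbar[X]) = C 2 from rfl, ← C_mul, inv_mul_cancel₀ two_ne_zero, C_1]
  have h20 : (2⁻¹ : kbar) ≠ 0 := inv_ne_zero two_ne_zero
  have h1n : (1 : kbar) ≠ -1 := by norm_num
  have hin : i ≠ -i := fun h => hi0 (self_eq_neg.mp h)
  have hg : g = C 2⁻¹ * ((b - C 1 * a) * (b - C (-1) * a)) := by
    simp only [C_neg, C_1]
    linear_combination (-g) * h2C + C 2⁻¹ * (hb - ha)
  have hh : h = C 2⁻¹ * ((b - C i * a) * (b - C (-i) * a)) := by
    simp only [C_neg]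
    linear_combination (-h) * h2C + C 2⁻¹ * (hb + ha) + C 2⁻¹ * a ^ 2 * hiC
  have hpair : ∀ c d : kbar, c ≠ d → Squarefree ((b - C c * a) * (b - C d * a)) := fun c d hcd =>
    squarefree_mul_of_isCoprime (isCoprime_pencil hab hcd) (squarefree_pencil hab ha1 hdb c)
      (squarefree_pencil hab ha1 hdb d)
  refine ⟨?_, ?_, hdh, ?_, ?_, ?_, ?_⟩
  · rw [hg, natDegree_C_mul h20]
    exact natDegree_pencil_mul_pos hab ha1 h1n
  · rw [hh, natDegree_C_mul h20]
    exact natDegree_pencil_mul_pos hab ha1 hin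
  · have hsq : Squarefree (a * b) := squarefree_mul_of_isCoprime hab
      (squarefree_of_natDegree_le_one (by rintro rfl; simp at ha1) hda)
      (squarefree_of_natDegree_le_one (by rintro rfl; simp at hdab) hdb)
    rcases hf with hf | hf
    · rwa [hf]
    · rw [hf, neg_eq_neg_one_mul, ← C_1, ← C_neg]
      exact squarefree_C_mul (by norm_num) hsq
  · rw [hg]; exact squarefree_C_mul h20 (hpair _ _ h1n)
  · rw [hh]; exact squarefree_C_mul h20 (hpair _ _ hin)
  · have hf2 : f ^ 2 = (a * b) ^ 2 := by rcases hf with hf | hf <;> rw [hf]; ring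
    -- The four factors multiply to `(b² - 2ab - a²) (b² + 2ab - a²) = (b² - a²)² - 4 a² b²`.
    have hprod : ((b - C (1 + s) * a) * (b - C (1 - s) * a)) *
        ((b - C (-1 + s) * a) * (b - C (-1 - s) * a)) = 4 * (g ^ 2 - f ^ 2) := by
      simp only [C_neg, C_add, C_sub, C_1]
      linear_combination (-(a ^ 2 * (2 * b ^ 2 - C s ^ 2 * a ^ 2))) * hsC
        - (b ^ 2 - a ^ 2 + 2 * g) * (hb - ha) + 4 * hf2
    have hfac : f ^ 2 - g ^ 2 = C (-(2⁻¹ * 2⁻¹)) *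
        (((b - C (1 + s) * a) * (b - C (1 - s) * a)) *
          ((b - C (-1 + s) * a) * (b - C (-1 - s) * a))) := by
      rw [hprod, C_neg, C_mul]
      linear_combination (-(f ^ 2 - g ^ 2) * (C 2⁻¹ * 2 + 1)) * h2C
    have hc : ∀ c d : kbar, c ≠ d → IsCoprime (b - C c * a) (b - C d * a) :=
      fun c d => isCoprime_pencil hab
    rw [hfac]
    refine squarefree_C_mul (neg_ne_zero.mpr (mul_ne_zero h20 h20))
      (squarefree_mul_of_isCoprime ?_ (hpair _ _ ?_) (hpair _ _ ?_))
    · refine ((hc _ _ ?_).mul_right (hc _ _ ?_)).mul_left ((hc _ _ ?_).mul_right (hc _ _ ?_))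
      · intro h; exact two_ne_zero (α := kbar) (by linear_combination h)
      · -- `1 + s = -1 - s` would give `s = -1`, against `s² = 2`
        intro h
        have h' : (2 : kbar) * (s + 1) = 0 := by linear_combination h
        have h2 := (mul_eq_zero.mp h').resolve_left two_ne_zero
        exact one_ne_zero (α := kbar) (by linear_combination (s - 1) * h2 - hs)
      · intro h
        have h' : (2 : kbar) * (s - 1) = 0 := by linear_combination -h
        have h2 := (mul_eq_zero.mp h').resolve_left two_ne_zero
        exact one_ne_zero (α := kbar) (by linear_combination (s + 1) * h2 - hs)
      · intro h; exact two_ne_zero (α := kbar) (by linear_combination h)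
    · intro h
      exact hs0 ((mul_eq_zero.mp (show (2 : kbar) * s = 0 by linear_combination h)).resolve_left
        two_ne_zero)
    · intro h
      exact hs0 ((mul_eq_zero.mp (show (2 : kbar) * s = 0 by linear_combination h)).resolve_left
        two_ne_zero)
end

section
/- Let a, b, s be elements of k with s² + 2 = 0. If both −a⁴ − 2a²b² + 3b⁴ − a³bs − 4ab³s = 0 and −a⁴ + 3a²b² + b⁴ − 2a³bs = 0 hold, then a = 0 and b = 0. -/
/-- if `a, b, s ∈ k` with `s² + 2 = 0` satisfy
`−a⁴ − 2a²b² + 3b⁴ − a³bs − 4ab³s = 0` and `−a⁴ + 3a²b² + b⁴ − 2a³bs = 0`,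
then `a = 0` and `b = 0`. -/
theorem leading_coefficients_vanish (a b s : kbar) (hs : s ^ 2 + 2 = 0)
    (h1 : -a ^ 4 - 2 * a ^ 2 * b ^ 2 + 3 * b ^ 4 - a ^ 3 * b * s - 4 * a * b ^ 3 * s = 0)
    (h2 : -a ^ 4 + 3 * a ^ 2 * b ^ 2 + b ^ 4 - 2 * a ^ 3 * b * s = 0) :
    a = 0 ∧ b = 0 := by
  obtain ⟨c, hc⟩ : ∃ c, c = a * s := ⟨_, rfl⟩
  have hc2 : c ^ 2 = -2 * a ^ 2 := by
    rw [hc]; linear_combination a ^ 2 * hs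
  -- The two quartics in `c` and `b`, cleared of denominators.
  have hP : c ^ 4 - 2 * c ^ 3 * b - 4 * c ^ 2 * b ^ 2 + 16 * c * b ^ 3 - 12 * b ^ 4 = 0 := by
    linear_combination (-4) * h1 + (c ^ 2 - 2 * a ^ 2 - 2 * c * b - 4 * b ^ 2) * hc2
      + (4 * a ^ 2 * b + 16 * b ^ 3) * hc
  have hQ : c ^ 4 - 4 * c ^ 3 * b + 6 * c ^ 2 * b ^ 2 - 4 * b ^ 4 = 0 := by
    linear_combination (-4) * h2 + (c ^ 2 - 2 * a ^ 2 - 4 * c * b + 6 * b ^ 2) * hc2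
      + (8 * a ^ 2 * b) * hc
  have hfac : b * ((c - b) * (c - 2 * b) ^ 2) = 0 := by
    linear_combination (1 / 2) * hP - (1 / 2) * hQ
  have hb : b = 0 := by
    rcases mul_eq_zero.mp hfac with h | h
    · exact h
    rcases mul_eq_zero.mp h with h | h
    · obtain rfl := sub_eq_zero.mp h
      exact eq_zero_of_pow_eq_zero (n := 4) (by linear_combination -hQ)
    · have h' : c = 2 * b := sub_eq_zero.mp (eq_zero_of_pow_eq_zero h)
      rw [h'] at hQ
      exact eq_zero_of_pow_eq_zero (n := 4) (by linear_combination (1 / 4) * hQ)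
  rw [hb] at h2
  exact ⟨eq_zero_of_pow_eq_zero (n := 4) (by linear_combination -h2), hb⟩
end

section
/- Let f, g ∈ k[t] be coprime polynomials with deg g ≤ deg f, and set n = deg f, a₂ = −(f² + g²), a₄ = f²·g² (the nonzero Weierstrass coefficients of y² = x(x − f²)(x − g²)). For any u ∈ k with u ≠ 0 and any polynomials r, s, w ∈ k[t], define the transformed Weierstrass coefficients a₁' = 2s/u, a₂' = (a₂ + 3r − s²)/u², a₃' = 2w/u³, a₄' = (a₄ + 2r·a₂ + 3r² − 2s·w)/u⁴ and a₆' = (r·a₄ + r²·a₂ + r³ − w²)/u⁶. Then: (a) for every point a ∈ k there exists an index i ∈ {1,2,3,4,6} such that the order of vanishing of a_i' at a is strictly less than i; and (b) there exists an index i ∈ {1,2,3,4,6} such that a_i' ≠ 0 and deg(a_i') ≥ (n−1)·i. (In particular the equation y² = x(x − f²)(x − g²) is a globally minimal Weierstrass model over k(t).) -/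
/-!
If the transformed equation failed to be minimal at `a`, all `aᵢ'` would vanish at `a`, so the
reduction at `a` of the cubic `x(x − f²)(x − g²)` would be the cube `(x − r)³`. A cubic with root
`0` is a cube only when all its roots are `0`, so `f(a) = g(a) = 0`, contradicting coprimality
(`eq_zero_of_transformed_eq_zero`).

The place at infinity is treated in the same way, with evaluation at `a` replaced by taking the
coefficient of `t ^ (n * i)` in a polynomial of weight `i` and degree at most `n * i`; this is
multiplicative. The conclusion is then that the coefficients of `t ^ n` in `f` and `g` vanish,
which forces `f = 0`, `n = 0` and `g = 0`.
-/

open Polynomial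

/-- Over a field of characteristic zero, if translating `x(x − F²)(x − G²)` by `r` gives `x³`,
then `F = G = 0`. -/
lemma eq_zero_of_transformed_eq_zero {K : Type*} [Field K] [CharZero K] {F G r : K}
    (h2 : -(F ^ 2 + G ^ 2) + 3 * r = 0)
    (h4 : F ^ 2 * G ^ 2 + 2 * r * -(F ^ 2 + G ^ 2) + 3 * r ^ 2 = 0)
    (h6 : r * (F ^ 2 * G ^ 2) + r ^ 2 * -(F ^ 2 + G ^ 2) + r ^ 3 = 0) :
    F = 0 ∧ G = 0 := by
  have hr : r = 0 := by
    have : r ^ 3 = 0 := by linear_combination h6 - r * h4 + r ^ 2 * h2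
    exact pow_eq_zero_iff (by norm_num) |>.1 this
  subst hr
  have hFG : F ^ 2 * G ^ 2 = 0 := by linear_combination h4
  have hS : F ^ 2 + G ^ 2 = 0 := by linear_combination -h2
  constructor
  · have : F ^ 4 = 0 := by linear_combination F ^ 2 * hS - hFG
    exact pow_eq_zero_iff (by norm_num) |>.1 this
  · have : G ^ 4 = 0 := by linear_combination G ^ 2 * hS - hFG
    exact pow_eq_zero_iff (by norm_num) |>.1 this

lemma eval_eq_zero_of_not_order_lt {K : Type*} [Field K] {p : K[X]} {a : K} {i : ℕ} (hi : 0 < i)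
    (h : ¬ (p ≠ 0 ∧ p.rootMultiplicity a < i)) : p.eval a = 0 := by
  by_cases hp : p = 0
  · simp [hp]
  · have h1 : i ≤ p.rootMultiplicity a := by
      by_contra h2
      exact h ⟨hp, not_le.1 h2⟩
    exact (rootMultiplicity_pos hp).1 (by omega)

/-- Failure of the degree bound in weight `i` is only used in the weaker form that `p` has degree
at most `n * i` and no term of that degree. The truncated subtraction `n - 1` at `n = 0` is
harmless, since then `p = 0`. -/
lemma natDegree_le_and_coeff_eq_zero {K : Type*} [Field K] {p : K[X]} {n i : ℕ}
    (h : ¬ (p ≠ 0 ∧ (n - 1) * i ≤ p.natDegree)) :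
    p.natDegree ≤ n * i ∧ p.coeff (n * i) = 0 := by
  by_cases hp : p = 0
  · simp [hp]
  · have h1 : p.natDegree < (n - 1) * i := by
      by_contra h2
      exact h ⟨hp, not_lt.1 h2⟩
    have h2 : (n - 1) * i ≤ n * i := Nat.mul_le_mul_right i (Nat.sub_le n 1)
    exact ⟨by omega, coeff_eq_zero_of_natDegree_lt (by omega)⟩

/-- minimality of the Weierstrass model `y² = x(x − f²)(x − g²)` for coprime
`f, g ∈ k[t]` with `deg g ≤ deg f`, `n = deg f`.  For any admissible change of coordinates
(`u ∈ k×`, `r, s, w ∈ k[t]`) with transformed coefficients `a₁', a₂', a₃', a₄', a₆'`: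
(a) at each `a ∈ k` some `aᵢ'` is nonzero with order of vanishing `< i`, and
(b) some `aᵢ'` is nonzero with `deg aᵢ' ≥ (n−1)·i`. -/
theorem globally_minimal_model (f g : Polynomial kbar)
    (hcop : ∀ a : kbar, ¬ (f.eval a = 0 ∧ g.eval a = 0))
    (hdg : g.natDegree ≤ f.natDegree)
    (n : ℕ) (hn : n = f.natDegree)
    (a₂ a₄ : Polynomial kbar) (ha₂ : a₂ = -(f ^ 2 + g ^ 2)) (ha₄ : a₄ = f ^ 2 * g ^ 2)
    (u : kbar) (hu : u ≠ 0) (r s w : Polynomial kbar)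
    (a₁' a₂' a₃' a₄' a₆' : Polynomial kbar)
    (h₁ : a₁' = C u⁻¹ * (2 * s))
    (h₂ : a₂' = C (u⁻¹ ^ 2) * (a₂ + 3 * r - s ^ 2))
    (h₃ : a₃' = C (u⁻¹ ^ 3) * (2 * w))
    (h₄ : a₄' = C (u⁻¹ ^ 4) * (a₄ + 2 * r * a₂ + 3 * r ^ 2 - 2 * s * w))
    (h₆ : a₆' = C (u⁻¹ ^ 6) * (r * a₄ + r ^ 2 * a₂ + r ^ 3 - w ^ 2)) :
    (∀ a : kbar,
      (a₁' ≠ 0 ∧ a₁'.rootMultiplicity a < 1) ∨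
      (a₂' ≠ 0 ∧ a₂'.rootMultiplicity a < 2) ∨
      (a₃' ≠ 0 ∧ a₃'.rootMultiplicity a < 3) ∨
      (a₄' ≠ 0 ∧ a₄'.rootMultiplicity a < 4) ∨
      (a₆' ≠ 0 ∧ a₆'.rootMultiplicity a < 6)) ∧
    ((a₁' ≠ 0 ∧ (n - 1) * 1 ≤ a₁'.natDegree) ∨
      (a₂' ≠ 0 ∧ (n - 1) * 2 ≤ a₂'.natDegree) ∨
      (a₃' ≠ 0 ∧ (n - 1) * 3 ≤ a₃'.natDegree) ∨
      (a₄' ≠ 0 ∧ (n - 1) * 4 ≤ a₄'.natDegree) ∨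
      (a₆' ≠ 0 ∧ (n - 1) * 6 ≤ a₆'.natDegree)) := by
  have hu' : u⁻¹ ≠ 0 := inv_ne_zero hu
  subst ha₂ ha₄
  constructor
  · intro a
    by_contra hneg
    simp only [not_or] at hneg
    obtain ⟨e1, e2, e3, e4, e6⟩ := hneg
    have e1 := eval_eq_zero_of_not_order_lt (by norm_num) e1
    have e2 := eval_eq_zero_of_not_order_lt (by norm_num) e2
    have e3 := eval_eq_zero_of_not_order_lt (by norm_num) e3
    have e4 := eval_eq_zero_of_not_order_lt (by norm_num) e4
    have e6 := eval_eq_zero_of_not_order_lt (by norm_num) e6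
    simp only [h₁, h₂, h₃, h₄, h₆, eval_mul, eval_C, eval_add, eval_sub, eval_neg, eval_pow,
      eval_ofNat, mul_eq_zero, hu', false_or, ne_eq, OfNat.ofNat_ne_zero,
      not_false_eq_true, pow_eq_zero_iff] at e1 e2 e3 e4 e6
    rw [e1] at e2 e4
    rw [e3] at e4 e6
    exact hcop a (eq_zero_of_transformed_eq_zero (F := f.eval a) (G := g.eval a)
      (r := r.eval a) (by linear_combination e2)
      (by linear_combination e4) (by linear_combination e6))
  · by_contra hneg
    simp only [not_or] at hneg
    obtain ⟨e1, e2, e3, e4, e6⟩ := hneg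
    obtain ⟨d1, c1⟩ := natDegree_le_and_coeff_eq_zero e1
    obtain ⟨d2, c2⟩ := natDegree_le_and_coeff_eq_zero e2
    obtain ⟨d3, c3⟩ := natDegree_le_and_coeff_eq_zero e3
    obtain ⟨-, c4⟩ := natDegree_le_and_coeff_eq_zero e4
    obtain ⟨-, c6⟩ := natDegree_le_and_coeff_eq_zero e6
    have two_eq : (2 : kbar[X]) = C 2 := (map_ofNat C 2).symm
    have three_eq : (3 : kbar[X]) = C 3 := (map_ofNat C 3).symm
    have two_ne : (2 : kbar) ≠ 0 := by norm_num
    have three_ne : (3 : kbar) ≠ 0 := by norm_num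
    have hf : f.natDegree ≤ n := hn.ge
    have hg : g.natDegree ≤ n := hdg.trans hn.ge
    rw [h₁, two_eq, natDegree_C_mul hu', natDegree_C_mul two_ne, mul_one] at d1
    rw [h₃, two_eq, natDegree_C_mul (pow_ne_zero _ hu'), natDegree_C_mul two_ne] at d3
    rw [h₂, natDegree_C_mul (pow_ne_zero _ hu')] at d2
    have pow_le {p : kbar[X]} {m : ℕ} (h : p.natDegree ≤ m) (j : ℕ) :
        (p ^ j).natDegree ≤ m * j := by
      rw [mul_comm m j]; exact natDegree_pow_le_of_le j h
    have dS : (f ^ 2 + g ^ 2).natDegree ≤ n * 2 :=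
      natDegree_add_le_of_degree_le (pow_le hf 2) (pow_le hg 2)
    -- The bound on `r` comes from `a₂'`, the other terms of which have degree at most `2 n`.
    have dr : r.natDegree ≤ n * 2 := by
      have h : (C 3 * r).natDegree ≤ n * 2 := by
        have : C 3 * r = (-(f ^ 2 + g ^ 2) + 3 * r - s ^ 2) + ((f ^ 2 + g ^ 2) + s ^ 2) := by
          rw [← three_eq]; ring
        rw [this]
        exact natDegree_add_le_of_degree_le d2 (natDegree_add_le_of_degree_le dS (pow_le d1 2))
      rwa [natDegree_C_mul three_ne] at h
    have cmul {p q : kbar[X]} {i j m : ℕ} (hp : p.natDegree ≤ n * i) (hq : q.natDegree ≤ n * j)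
        (hm : i + j = m) : (p * q).coeff (n * m) = p.coeff (n * i) * q.coeff (n * j) := by
      rw [← hm, mul_add]; exact coeff_mul_add_eq_of_natDegree_le hp hq
    have cpow {p : kbar[X]} {i j m : ℕ} (hp : p.natDegree ≤ n * i) (hm : i * j = m) :
        (p ^ j).coeff (n * m) = p.coeff (n * i) ^ j := by
      rw [← hm, ← mul_assoc, mul_comm (n * i)]; exact coeff_pow_of_natDegree_le hp
    have hf1 : f.natDegree ≤ n * 1 := by simpa using hf
    have hg1 : g.natDegree ≤ n * 1 := by simpa using hg
    have d1' : s.natDegree ≤ n * 1 := by simpa using d1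
    have dP : (f ^ 2 * g ^ 2).natDegree ≤ n * 4 :=
      (natDegree_mul_le_of_le (pow_le hf 2) (pow_le hg 2)).trans (by omega)
    have dr2 : (r ^ 2).natDegree ≤ n * 4 := (pow_le dr 2).trans (by omega)
    rw [h₁, two_eq, coeff_C_mul, coeff_C_mul] at c1
    rw [h₃, two_eq, coeff_C_mul, coeff_C_mul] at c3
    have s0 : s.coeff (n * 1) = 0 := by simpa [hu'] using c1
    have w0 : w.coeff (n * 3) = 0 := by simpa [hu] using c3
    have cS : (f ^ 2 + g ^ 2).coeff (n * 2) = f.coeff (n * 1) ^ 2 + g.coeff (n * 1) ^ 2 := by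
      rw [coeff_add, cpow hf1 (by norm_num), cpow hg1 (by norm_num)]
    have cP : (f ^ 2 * g ^ 2).coeff (n * 4) = f.coeff (n * 1) ^ 2 * g.coeff (n * 1) ^ 2 := by
      rw [cmul (pow_le hf 2) (pow_le hg 2) (by norm_num), cpow hf1 (by norm_num),
        cpow hg1 (by norm_num)]
    have dS' : (-(f ^ 2 + g ^ 2)).natDegree ≤ n * 2 := by rwa [natDegree_neg]
    have k2 : -(f ^ 2 + g ^ 2).coeff (n * 2) + 3 * r.coeff (n * 2) - s.coeff (n * 1) ^ 2 = 0 := by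
      rw [h₂, coeff_C_mul, three_eq, coeff_sub, coeff_add, coeff_C_mul, coeff_neg,
        cpow d1' (by norm_num)] at c2
      exact (mul_eq_zero.1 c2).resolve_left (pow_ne_zero _ hu')
    have k4 : (f ^ 2 * g ^ 2).coeff (n * 4) + 2 * (r.coeff (n * 2) * -(f ^ 2 + g ^ 2).coeff (n * 2))
        + 3 * r.coeff (n * 2) ^ 2 - 2 * (s.coeff (n * 1) * w.coeff (n * 3)) = 0 := by
      rw [h₄, coeff_C_mul, two_eq, three_eq, mul_assoc (C 2) r, mul_assoc (C 2) s, coeff_sub,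
        coeff_add, coeff_add, coeff_C_mul, coeff_C_mul, coeff_C_mul, cmul dr dS' (by norm_num),
        cmul d1' d3 (by norm_num), cpow dr (by norm_num), coeff_neg] at c4
      exact (mul_eq_zero.1 c4).resolve_left (pow_ne_zero _ hu')
    have k6 : r.coeff (n * 2) * (f ^ 2 * g ^ 2).coeff (n * 4)
        + r.coeff (n * 2) ^ 2 * -(f ^ 2 + g ^ 2).coeff (n * 2)
        + r.coeff (n * 2) ^ 3 - w.coeff (n * 3) ^ 2 = 0 := by
      rw [h₆, coeff_C_mul, coeff_sub, coeff_add, coeff_add, cmul dr dP (by norm_num),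
        cmul dr2 dS' (by norm_num), cpow dr (by norm_num), cpow dr (by norm_num),
        cpow d3 (by norm_num), coeff_neg] at c6
      exact (mul_eq_zero.1 c6).resolve_left (pow_ne_zero _ hu')
    rw [s0, cS] at k2
    rw [s0, w0, cS, cP] at k4
    rw [w0, cS, cP] at k6
    obtain ⟨hF, hG⟩ := eq_zero_of_transformed_eq_zero
      (F := f.coeff (n * 1)) (G := g.coeff (n * 1)) (r := r.coeff (n * 2))
      (by linear_combination k2) (by linear_combination k4) (by linear_combination k6)
    rw [mul_one] at hF hG
    have f0 : f = 0 := by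
      rw [hn] at hF
      exact leadingCoeff_eq_zero.1 hF
    have n0 : n = 0 := by simp [hn, f0]
    rw [n0, coeff_zero_eq_eval_zero] at hF hG
    exact hcop 0 ⟨hF, hG⟩
end
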